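/- arXiv:2110.00447 — 4 statements merged into one kernel-verified Lean document; each statement's English description precedes it below -/
import Mathlib

section
/- Let m > 0 and u_max > 0, and let (x, y, z, ẋ, ẏ, ż) ∈ ℝ⁶ be a state satisfying (3n²x + 2nẏ)² < (u_max/m)², (2nẋ)² < (u_max/m)², and (n²z)² < (u_max/m)². Then there exists a control u = (u₁, u₂, u₃) with |uᵢ| ≤ u_max for i = 1, 2, 3 such that ẋ·(3n²x + 2nẏ + u₁/m) ≤ 0, ẏ·(−2nẋ + u₂/m) ≤ 0, and ż·(−n²z + u₃/m) ≤ 0; in particular the time derivatives of v_max² − ẋ², v_max² − ẏ², and v_max² − ż² along the controlled Clohessy–Wiltshire dynamics are all nonnegative at this state. -/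
theorem cw_cancel (m umax a : ℝ) (hm : 0 < m) (hu : 0 < umax)
    (h : a ^ 2 < (umax / m) ^ 2) : |-(m * a)| ≤ umax ∧ a + -(m * a) / m = 0 := by
  constructor
  · have h' := abs_lt_of_sq_lt_sq h (by positivity)
    rw [lt_div_iff₀ hm] at h'
    rw [abs_neg, abs_mul, abs_of_pos hm]
    linarith
  · field_simp
    ring

/-- Lemma 2: control invariance of the maximum velocity limits for the
controlled Clohessy–Wiltshire dynamics. -/
theorem max_velocity_control_invariance
    (n m umax : ℝ) (hm : 0 < m) (hu : 0 < umax)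
    (x y z xd yd zd : ℝ)
    (h1 : (3 * n ^ 2 * x + 2 * n * yd) ^ 2 < (umax / m) ^ 2)
    (h2 : (2 * n * xd) ^ 2 < (umax / m) ^ 2)
    (h3 : (n ^ 2 * z) ^ 2 < (umax / m) ^ 2) :
    ∃ u₁ u₂ u₃ : ℝ, |u₁| ≤ umax ∧ |u₂| ≤ umax ∧ |u₃| ≤ umax ∧
      xd * (3 * n ^ 2 * x + 2 * n * yd + u₁ / m) ≤ 0 ∧
      yd * (-(2 * n) * xd + u₂ / m) ≤ 0 ∧
      zd * (-n ^ 2 * z + u₃ / m) ≤ 0 := by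
  obtain ⟨a1, b1⟩ := cw_cancel m umax _ hm hu h1
  obtain ⟨a2, b2⟩ := cw_cancel m umax (-(2 * n) * xd) hm hu (by convert h2 using 1; ring)
  obtain ⟨a3, b3⟩ := cw_cancel m umax (-n ^ 2 * z) hm hu (by convert h3 using 1; ring)
  refine ⟨_, _, _, a1, a2, a3, ?_, ?_, ?_⟩
  · rw [b1, mul_zero]
  · rw [b2, mul_zero]
  · rw [b3, mul_zero]
end

section
/- Let n > 0, ν₁ ≥ 2n, ν₀ ≥ 0, b > 0, and c ∈ ℝ with c²·n² ≤ b²·(ν₁² − 4n²). Let γ(t) = (b·sin(nt + ν), 2b·cos(nt + ν), c·sin(nt + ψ)) for arbitrary phases ν, ψ ∈ ℝ. Then for all t ∈ ℝ, the distance-dependent speed limit holds along γ: √(γ₁'(t)² + γ₂'(t)² + γ₃'(t)²) ≤ ν₀ + ν₁·√(γ₁(t)² + γ₂(t)² + γ₃(t)²). -/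
/-- First half of Lemma 3: elliptical NMTs whose parameters satisfy
`c²n² ≤ b²(ν₁² − 4n²)` satisfy the distance-dependent speed limit for all
time. -/
theorem nmt_satisfies_speed_limit
    (n ν₀ ν₁ b c ν ψ : ℝ) (hn : 0 < n) (hν₁ : ν₁ ≥ 2 * n) (hν₀ : 0 ≤ ν₀)
    (hb : 0 < b) (hc : c ^ 2 * n ^ 2 ≤ b ^ 2 * (ν₁ ^ 2 - 4 * n ^ 2))
    (γ₁ γ₂ γ₃ : ℝ → ℝ)
    (hγ₁ : γ₁ = fun t => b * Real.sin (n * t + ν))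
    (hγ₂ : γ₂ = fun t => 2 * b * Real.cos (n * t + ν))
    (hγ₃ : γ₃ = fun t => c * Real.sin (n * t + ψ)) :
    ∀ t : ℝ,
      Real.sqrt (deriv γ₁ t ^ 2 + deriv γ₂ t ^ 2 + deriv γ₃ t ^ 2) ≤
        ν₀ + ν₁ * Real.sqrt (γ₁ t ^ 2 + γ₂ t ^ 2 + γ₃ t ^ 2) := by
  intro t
  have hl : ∀ p : ℝ, HasDerivAt (fun t : ℝ => n * t + p) n t := fun p => by
    simpa using ((hasDerivAt_id t).const_mul n).add_const p
  have d1 : deriv γ₁ t = b * (Real.cos (n * t + ν) * n) := by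
    rw [hγ₁]; exact ((hl ν).sin.const_mul b).deriv
  have d2 : deriv γ₂ t = 2 * b * (-Real.sin (n * t + ν) * n) := by
    rw [hγ₂]; exact ((hl ν).cos.const_mul (2 * b)).deriv
  have d3 : deriv γ₃ t = c * (Real.cos (n * t + ψ) * n) := by
    rw [hγ₃]; exact ((hl ψ).sin.const_mul c).deriv
  rw [d1, d2, d3, hγ₁, hγ₂, hγ₃]
  dsimp only
  have e1 := Real.sin_sq_add_cos_sq (n * t + ν)
  have e2 := Real.sin_sq_add_cos_sq (n * t + ψ)
  generalize Real.sin (n * t + ν) = S at *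
  generalize Real.cos (n * t + ν) = C at *
  generalize Real.sin (n * t + ψ) = P at *
  generalize Real.cos (n * t + ψ) = Q at *
  have hpos : 0 ≤ ν₁ := by linarith
  have key : (b * (C * n)) ^ 2 + (2 * b * (-S * n)) ^ 2 + (c * (Q * n)) ^ 2 ≤
      ν₁ ^ 2 * ((b * S) ^ 2 + (2 * b * C) ^ 2 + (c * P) ^ 2) := by
    have hS : S ^ 2 = 1 - C ^ 2 := by linarith
    have hQ : Q ^ 2 = 1 - P ^ 2 := by linarith
    have l : (b * (C * n)) ^ 2 + (2 * b * (-S * n)) ^ 2 + (c * (Q * n)) ^ 2 =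
        n ^ 2 * b ^ 2 * (4 - 3 * C ^ 2) + c ^ 2 * n ^ 2 * (1 - P ^ 2) := by
      rw [← hQ, show 4 - 3 * C ^ 2 = C ^ 2 + 4 * S ^ 2 by rw [hS]; ring]; ring
    have r : ν₁ ^ 2 * ((b * S) ^ 2 + (2 * b * C) ^ 2 + (c * P) ^ 2) =
        ν₁ ^ 2 * (b ^ 2 * (1 + 3 * C ^ 2) + (c * P) ^ 2) := by
      rw [show 1 + 3 * C ^ 2 = S ^ 2 + 4 * C ^ 2 by rw [hS]; ring]; ring
    rw [l, r]
    have h1 := sq_nonneg (n * b * C)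
    have h2 := sq_nonneg (ν₁ * b * C)
    have h3 := sq_nonneg (ν₁ * (c * P))
    have h4 := sq_nonneg (c * n * P)
    linarith
  have h := Real.sqrt_le_sqrt key
  rw [Real.sqrt_mul (sq_nonneg _), Real.sqrt_sq hpos] at h
  linarith
end

section
/- Let n > 0, v_max ≥ 0, 0 ≤ b ≤ v_max/(2n), 0 ≤ c ≤ v_max/n, and ν, ψ ∈ ℝ, and let γ(t) = (b·sin(nt + ν), 2b·cos(nt + ν), c·sin(nt + ψ)). Then for all t ∈ ℝ the maximum velocity limits hold along γ: |γ₁'(t)| ≤ v_max, |γ₂'(t)| ≤ v_max, and |γ₃'(t)| ≤ v_max. -/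
/-- Second half of Lemma 3: elliptical NMTs with `b ≤ v_max/(2n)` and
`c ≤ v_max/n` satisfy the maximum velocity limits for all time. -/
theorem nmt_satisfies_velocity_limits
    (n vmax b c ν ψ : ℝ) (hn : 0 < n) (hvmax : 0 ≤ vmax)
    (hb0 : 0 ≤ b) (hb : b ≤ vmax / (2 * n))
    (hc0 : 0 ≤ c) (hc : c ≤ vmax / n)
    (γ₁ γ₂ γ₃ : ℝ → ℝ)
    (hγ₁ : γ₁ = fun t => b * Real.sin (n * t + ν))
    (hγ₂ : γ₂ = fun t => 2 * b * Real.cos (n * t + ν))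
    (hγ₃ : γ₃ = fun t => c * Real.sin (n * t + ψ)) :
    ∀ t : ℝ, |deriv γ₁ t| ≤ vmax ∧ |deriv γ₂ t| ≤ vmax ∧
      |deriv γ₃ t| ≤ vmax := by
  intro t
  have hl : ∀ a : ℝ, HasDerivAt (fun t : ℝ => n * t + a) n t := fun a => by
    simpa using ((hasDerivAt_id t).const_mul n).add_const a
  have key : ∀ A x : ℝ, 0 ≤ A → A * n ≤ vmax → |x| ≤ 1 → |A * (x * n)| ≤ vmax := by
    intro A x hA h hx
    rw [abs_mul, abs_mul, abs_of_nonneg hA, abs_of_pos hn]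
    have h1 : 0 ≤ A * n := mul_nonneg hA hn.le
    nlinarith [mul_le_mul_of_nonneg_left hx h1]
  rw [le_div_iff₀ (by positivity)] at hb
  rw [le_div_iff₀ hn] at hc
  have hbn : 0 ≤ b * n := mul_nonneg hb0 hn.le
  have d1 : deriv γ₁ t = b * (Real.cos (n * t + ν) * n) := by
    rw [hγ₁]; exact ((hl ν).sin.const_mul b).deriv
  have d2 : deriv γ₂ t = 2 * b * (-Real.sin (n * t + ν) * n) := by
    rw [hγ₂]; exact ((hl ν).cos.const_mul (2 * b)).deriv
  have d3 : deriv γ₃ t = c * (Real.cos (n * t + ψ) * n) := by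
    rw [hγ₃]; exact ((hl ψ).sin.const_mul c).deriv
  rw [d1, d2, d3]
  refine ⟨key _ _ hb0 (by linarith) (Real.abs_cos_le_one _),
    key _ _ (by linarith) (by linarith) ?_, key _ _ hc0 hc (Real.abs_cos_le_one _)⟩
  rw [abs_neg]
  exact Real.abs_sin_le_one _
end

section
/- Let n > 0, ν₁ ≥ 2n, ν₀ ≥ 0, v_max ≥ 0, and let b, c satisfy 0 < b ≤ v_max/(2n), 0 ≤ c ≤ v_max/n, and c²·n² ≤ b²·(ν₁² − 4n²). Let γ(t) = (b·sin(nt + ν), 2b·cos(nt + ν), c·sin(nt + ψ)) for arbitrary phases ν, ψ ∈ ℝ. Then for all t ∈ ℝ the state (γ(t), γ'(t)) lies in the allowable set, i.e., all four safety constraints hold: √(γ₁'² + γ₂'² + γ₃'²) ≤ ν₀ + ν₁·√(γ₁² + γ₂² + γ₃²), and |γ₁'(t)| ≤ v_max, |γ₂'(t)| ≤ v_max, |γ₃'(t)| ≤ v_max. -/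
/-- Combined conclusion of Lemma 3: the states of an elliptical NMT whose
parameters satisfy the given constraints lie in the allowable set, i.e.,
all four safety constraints hold for all time. -/
theorem nmt_in_allowable_set
    (n ν₀ ν₁ vmax b c ν ψ : ℝ) (hn : 0 < n) (hν₁ : ν₁ ≥ 2 * n) (hν₀ : 0 ≤ ν₀)
    (hvmax : 0 ≤ vmax)
    (hb0 : 0 < b) (hb : b ≤ vmax / (2 * n))
    (hc0 : 0 ≤ c) (hc : c ≤ vmax / n)
    (hcb : c ^ 2 * n ^ 2 ≤ b ^ 2 * (ν₁ ^ 2 - 4 * n ^ 2))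
    (γ₁ γ₂ γ₃ : ℝ → ℝ)
    (hγ₁ : γ₁ = fun t => b * Real.sin (n * t + ν))
    (hγ₂ : γ₂ = fun t => 2 * b * Real.cos (n * t + ν))
    (hγ₃ : γ₃ = fun t => c * Real.sin (n * t + ψ)) :
    ∀ t : ℝ,
      Real.sqrt (deriv γ₁ t ^ 2 + deriv γ₂ t ^ 2 + deriv γ₃ t ^ 2) ≤
          ν₀ + ν₁ * Real.sqrt (γ₁ t ^ 2 + γ₂ t ^ 2 + γ₃ t ^ 2) ∧
        |deriv γ₁ t| ≤ vmax ∧ |deriv γ₂ t| ≤ vmax ∧ |deriv γ₃ t| ≤ vmax := by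
  intro t
  have hlin : ∀ a : ℝ, HasDerivAt (fun t : ℝ => n * t + a) n t := fun a => by
    simpa using ((hasDerivAt_id t).const_mul n).add_const a
  have d1 : deriv γ₁ t = b * (Real.cos (n * t + ν) * n) := by
    rw [hγ₁]; exact ((hlin ν).sin.const_mul b).deriv
  have d2 : deriv γ₂ t = 2 * b * (-Real.sin (n * t + ν) * n) := by
    rw [hγ₂]; exact ((hlin ν).cos.const_mul (2 * b)).deriv
  have d3 : deriv γ₃ t = c * (Real.cos (n * t + ψ) * n) := by
    rw [hγ₃]; exact ((hlin ψ).sin.const_mul c).deriv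
  have e1 : γ₁ t = b * Real.sin (n * t + ν) := by rw [hγ₁]
  have e2 : γ₂ t = 2 * b * Real.cos (n * t + ν) := by rw [hγ₂]
  have e3 : γ₃ t = c * Real.sin (n * t + ψ) := by rw [hγ₃]
  rw [d1, d2, d3, e1, e2, e3]
  have hb' : 2 * b * n ≤ vmax := by
    rw [le_div_iff₀ (by positivity)] at hb; linarith
  have hc' : c * n ≤ vmax := by
    rwa [le_div_iff₀ hn] at hc
  have hbn : 0 < b * n := mul_pos hb0 hn
  have hcn : 0 ≤ c * n := mul_nonneg hc0 hn.le
  have p1 := Real.sin_sq_add_cos_sq (n * t + ν)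
  have p2 := Real.sin_sq_add_cos_sq (n * t + ψ)
  have a1 := Real.abs_cos_le_one (n * t + ν)
  have a2 := Real.abs_sin_le_one (n * t + ν)
  have a3 := Real.abs_cos_le_one (n * t + ψ)
  generalize Real.sin (n * t + ν) = s at *
  generalize Real.cos (n * t + ν) = k at *
  generalize Real.sin (n * t + ψ) = s' at *
  generalize Real.cos (n * t + ψ) = k' at *
  have hν : 0 ≤ ν₁ := by linarith
  refine ⟨?_, ?_, ?_, ?_⟩
  · have key : (b * (k * n)) ^ 2 + (2 * b * (-s * n)) ^ 2 + (c * (k' * n)) ^ 2 ≤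
        ν₁ ^ 2 * ((b * s) ^ 2 + (2 * b * k) ^ 2 + (c * s') ^ 2) := by
      have h1 : (b * (k * n)) ^ 2 + (2 * b * (-s * n)) ^ 2 = 4 * (b * n) ^ 2 - 3 * (b * n * k) ^ 2 := by
        linear_combination (4 * b ^ 2 * n ^ 2) * p1
      have h2 : (c * (k' * n)) ^ 2 = c ^ 2 * n ^ 2 - (c * n * s') ^ 2 := by
        linear_combination (c ^ 2 * n ^ 2) * p2
      have h3 : ν₁ ^ 2 * ((b * s) ^ 2 + (2 * b * k) ^ 2 + (c * s') ^ 2) =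
          ν₁ ^ 2 * b ^ 2 + 3 * (ν₁ * b * k) ^ 2 + (ν₁ * c * s') ^ 2 := by
        linear_combination (ν₁ ^ 2 * b ^ 2) * p1
      rw [h1, h2, h3]
      linarith [sq_nonneg (b * n * k), sq_nonneg (c * n * s'), sq_nonneg (ν₁ * b * k),
        sq_nonneg (ν₁ * c * s'), mul_pow b n 2]
    have h := Real.sqrt_le_sqrt key
    rw [Real.sqrt_mul (sq_nonneg ν₁), Real.sqrt_sq hν] at h
    linarith
  · have : |b * (k * n)| = b * n * |k| := by
      rw [show b * (k * n) = b * n * k by ring, abs_mul, abs_of_pos hbn]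
    rw [this]; nlinarith
  · have : |2 * b * (-s * n)| = 2 * (b * n) * |s| := by
      rw [show 2 * b * (-s * n) = -(2 * (b * n) * s) by ring, abs_neg, abs_mul,
        abs_of_pos (by linarith : 0 < 2 * (b * n))]
    rw [this]; nlinarith
  · have : |c * (k' * n)| = c * n * |k'| := by
      rw [show c * (k' * n) = c * n * k' by ring, abs_mul, abs_of_nonneg hcn]
    rw [this]; nlinarith
end
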